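/- arXiv:2306.07018 — 2 statements merged into one kernel-verified Lean document; each statement's English description precedes it below -/
import Mathlib

section
/- Under the IV assumptions (Independence, Relevance, Monotonicity, Exclusion), the first stage for D2 satisfies ΔE[D2|Z] = μ({C1,C2}) + μ({N1,C2}) + μ({A1,C2}). (Lemma 1.2) -/
open MeasureTheory ProbabilityTheory

noncomputable section

variable {Ω : Type*} [MeasurableSpace Ω]

/-- Observed first-part treatment: `D1 = D1(1)·Z + D1(0)·(1−Z)`. -/
def obsD1 (Z : Ω → ℝ) (D1 : Bool → Ω → ℝ) (ω : Ω) : ℝ :=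
  D1 true ω * Z ω + D1 false ω * (1 - Z ω)

/-- Observed second-part treatment. -/
def obsD2 (Z : Ω → ℝ) (D1 : Bool → Ω → ℝ) (D2 : Bool → Bool → Ω → ℝ) (ω : Ω) : ℝ :=
  (D2 true true ω * obsD1 Z D1 ω + D2 true false ω * (1 - obsD1 Z D1 ω)) * Z ω +
  (D2 false true ω * obsD1 Z D1 ω + D2 false false ω * (1 - obsD1 Z D1 ω)) * (1 - Z ω)

/-- Summary treatment `D∧ = D1·D2`. -/
def obsDand (Z : Ω → ℝ) (D1 : Bool → Ω → ℝ) (D2 : Bool → Bool → Ω → ℝ) (ω : Ω) : ℝ :=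
  obsD1 Z D1 ω * obsD2 Z D1 D2 ω

/-- Summary treatment `D∨ = D1 + D2 − D1·D2`. -/
def obsDor (Z : Ω → ℝ) (D1 : Bool → Ω → ℝ) (D2 : Bool → Bool → Ω → ℝ) (ω : Ω) : ℝ :=
  obsD1 Z D1 ω + obsD2 Z D1 D2 ω - obsD1 Z D1 ω * obsD2 Z D1 D2 ω

/-- Observed outcome `Y = Σ_{d1,d2} Y(Z,d1,d2)·1{D1=d1, D2=d2}`, written out using that the
observed treatments and the instrument are {0,1}-valued. The first index of `Yp` is `z`, the
second is `d1`, the third is `d2`. -/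
def obsY (Z : Ω → ℝ) (D1 : Bool → Ω → ℝ) (D2 : Bool → Bool → Ω → ℝ)
    (Yp : Bool → Bool → Bool → Ω → ℝ) (ω : Ω) : ℝ :=
  (Yp true true true ω * obsD1 Z D1 ω * obsD2 Z D1 D2 ω +
   Yp true false true ω * (1 - obsD1 Z D1 ω) * obsD2 Z D1 D2 ω +
   Yp true true false ω * obsD1 Z D1 ω * (1 - obsD2 Z D1 D2 ω) +
   Yp true false false ω * (1 - obsD1 Z D1 ω) * (1 - obsD2 Z D1 D2 ω)) * Z ω +
  (Yp false true true ω * obsD1 Z D1 ω * obsD2 Z D1 D2 ω +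
   Yp false false true ω * (1 - obsD1 Z D1 ω) * obsD2 Z D1 D2 ω +
   Yp false true false ω * obsD1 Z D1 ω * (1 - obsD2 Z D1 D2 ω) +
   Yp false false false ω * (1 - obsD1 Z D1 ω) * (1 - obsD2 Z D1 D2 ω)) * (1 - Z ω)

/-- `ΔE[A|Z] := E[A | Z = 1] − E[A | Z = 0]`, expectations under conditional measures. -/
def dE (μ : Measure Ω) (Z A : Ω → ℝ) : ℝ :=
  (∫ ω, A ω ∂(μ[|Z ⁻¹' {1}])) - (∫ ω, A ω ∂(μ[|Z ⁻¹' {0}]))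

/-- The full-complier event `{C1,C2}`. -/
def CCev (D1 : Bool → Ω → ℝ) (D2 : Bool → Bool → Ω → ℝ) : Set Ω :=
  {ω | D1 true ω - D1 false ω = 1 ∧ D2 true true ω - D2 false false ω = 1}

/-- The mover event `{C1,N2}`. -/
def CNev (D1 : Bool → Ω → ℝ) (D2 : Bool → Bool → Ω → ℝ) : Set Ω :=
  {ω | D1 true ω - D1 false ω = 1 ∧ D2 true true ω = 0 ∧ D2 false false ω = 0}

/-- The mover event `{C1,A2}`. -/
def CAev (D1 : Bool → Ω → ℝ) (D2 : Bool → Bool → Ω → ℝ) : Set Ω :=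
  {ω | D1 true ω - D1 false ω = 1 ∧ D2 true true ω = 1 ∧ D2 false false ω = 1}

/-- The mover event `{N1,C2}`. -/
def NCev (D1 : Bool → Ω → ℝ) (D2 : Bool → Bool → Ω → ℝ) : Set Ω :=
  {ω | D1 true ω = 0 ∧ D1 false ω = 0 ∧ D2 true false ω - D2 false false ω = 1}

/-- The mover event `{A1,C2}`. -/
def ACev (D1 : Bool → Ω → ℝ) (D2 : Bool → Bool → Ω → ℝ) : Set Ω :=
  {ω | D1 true ω = 1 ∧ D1 false ω = 1 ∧ D2 true true ω - D2 false true ω = 1}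

/-!
Write `P z = D2(z, D1(z))` for the treatment `D2` that would be observed under the instrument value
`z`. Independence turns the first stage into `∫ P 1 - ∫ P 0`, and since `P 0 ≤ P 1` are
`{0,1}`-valued this difference is the measure of `{P 1 - P 0 = 1}`. As `D1(0) ≤ D1(1)`, every `ω` is
a complier, a never-taker or an always-taker for `D1`, and inside these three classes the event
`{P 1 - P 0 = 1}` reads `{C1,C2}`, `{N1,C2}` and `{A1,C2}`.
-/

section Conditioning

variable {α β γ : Type*} [MeasurableSpace α] [MeasurableSpace β] [MeasurableSpace γ]
  {μ : Measure α}

lemma identDistrib_cond_preimage_of_indepFun [IsFiniteMeasure μ] {X : α → β} {Z : α → γ}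
    (hX : Measurable X) (h : IndepFun X Z μ) {s : Set γ} (hs : MeasurableSet s)
    (hμs : μ (Z ⁻¹' s) ≠ 0) :
    IdentDistrib X X (μ[|Z ⁻¹' s]) μ where
  aemeasurable_fst := hX.aemeasurable
  aemeasurable_snd := hX.aemeasurable
  map_eq := by
    ext t ht
    rw [Measure.map_apply hX ht, Measure.map_apply hX ht, cond_apply' (hX ht), Set.inter_comm,
      h.measure_inter_preimage_eq_mul t s ht hs, mul_comm (μ (X ⁻¹' t)), ← mul_assoc,
      ENNReal.inv_mul_cancel hμs (measure_ne_top μ _), one_mul]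

lemma measure_ne_zero_of_union_eq_univ [IsProbabilityMeasure μ] {s t : Set α}
    (hst : s ∪ t = Set.univ) (hs : μ s < 1) : μ t ≠ 0 := by
  intro ht
  have : (1 : ENNReal) ≤ μ s := by
    calc 1 = μ (s ∪ t) := by rw [hst, measure_univ]
      _ ≤ μ s + μ t := measure_union_le s t
      _ = μ s := by rw [ht, add_zero]
  exact hs.not_ge this

end Conditioning

section BinaryTreatment

/-- The event that the potential treatment `P` (with `P z` the treatment taken under the instrument
value `z`) is moved by the instrument from `0` to `1`. -/
def compliers {α : Type*} (P : Bool → α → ℝ) : Set α :=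
  {ω | P true ω - P false ω = 1}

lemma integral_sub_integral_eq_measureReal_compliers {α : Type*} [MeasurableSpace α]
    {μ : Measure α} [IsFiniteMeasure μ] {P : Bool → α → ℝ} (hP : ∀ z, Measurable (P z))
    (hP01 : ∀ z ω, P z ω = 0 ∨ P z ω = 1) (hmono : ∀ᵐ ω ∂μ, P false ω ≤ P true ω) :
    ∫ ω, P true ω ∂μ - ∫ ω, P false ω ∂μ = μ.real (compliers P) := by
  have integrable (z : Bool) : Integrable (P z) μ := by
    refine .of_bound (hP z).aestronglyMeasurable 1 (ae_of_all μ fun ω => ?_)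
    rcases hP01 z ω with h | h <;> simp [h]
  have measurableSet_compliers : MeasurableSet (compliers P) :=
    measurableSet_eq_fun ((hP true).sub (hP false)) measurable_const
  rw [← integral_sub (integrable true) (integrable false),
    ← integral_indicator_one measurableSet_compliers]
  refine integral_congr_ae ?_
  filter_upwards [hmono] with ω hω
  rcases hP01 true ω with h1 | h1 <;> rcases hP01 false ω with h0 | h0 <;>
    simp_all [compliers, Set.indicator, not_le_of_gt]

lemma dE_eq_integral_sub_integral {μ : Measure Ω} [IsFiniteMeasure μ] {Z A : Ω → ℝ}
    {P : Bool → Ω → ℝ} (hZ : Measurable Z) (hP : ∀ z, Measurable (P z))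
    (hindep : ∀ z, IndepFun (P z) Z μ)
    (hZ1 : μ (Z ⁻¹' {1}) ≠ 0) (hZ0 : μ (Z ⁻¹' {0}) ≠ 0)
    (hA1 : ∀ ω, Z ω = 1 → A ω = P true ω) (hA0 : ∀ ω, Z ω = 0 → A ω = P false ω) :
    dE μ Z A = ∫ ω, P true ω ∂μ - ∫ ω, P false ω ∂μ := by
  have integral_cond_eq {z : Bool} {c : ℝ} (hc : μ (Z ⁻¹' {c}) ≠ 0)
      (hA : ∀ ω, Z ω = c → A ω = P z ω) :
      ∫ ω, A ω ∂(μ[|Z ⁻¹' {c}]) = ∫ ω, P z ω ∂μ :=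
    calc ∫ ω, A ω ∂(μ[|Z ⁻¹' {c}])
        = ∫ ω, P z ω ∂(μ[|Z ⁻¹' {c}]) :=
          integral_congr_ae (ae_cond_of_forall_mem (hZ (measurableSet_singleton c)) hA)
      _ = ∫ ω, P z ω ∂μ :=
          (identDistrib_cond_preimage_of_indepFun (hP z) (hindep z)
            (measurableSet_singleton c) hc).integral_eq
  rw [dE, integral_cond_eq hZ1 hA1, integral_cond_eq hZ0 hA0]

end BinaryTreatment

section SecondTreatment

variable {α : Type*} {D1 : Bool → α → ℝ} {D2 : Bool → Bool → α → ℝ}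

/-- The second treatment `D2(z, D1(z))` under the instrument value `z`, when the first treatment
responds to the instrument as well; `D2 z (D1 z)` is written out using that `D1 z` is
`{0,1}`-valued. -/
def potD2 (D1 : Bool → α → ℝ) (D2 : Bool → Bool → α → ℝ) (z : Bool) (ω : α) : ℝ :=
  D2 z true ω * D1 z ω + D2 z false ω * (1 - D1 z ω)

lemma potD2_eq_zero_or_one {z : Bool} {ω : α} (hD1 : D1 z ω = 0 ∨ D1 z ω = 1)
    (hD2 : ∀ d, D2 z d ω = 0 ∨ D2 z d ω = 1) :
    potD2 D1 D2 z ω = 0 ∨ potD2 D1 D2 z ω = 1 := by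
  rcases hD1 with h | h
  · simpa [potD2, h] using hD2 false
  · simpa [potD2, h] using hD2 true

lemma obsD2_eq_potD2_true {Z : α → ℝ} {ω : α} (hZ : Z ω = 1) :
    obsD2 Z D1 D2 ω = potD2 D1 D2 true ω := by
  simp [obsD2, obsD1, potD2, hZ]

lemma obsD2_eq_potD2_false {Z : α → ℝ} {ω : α} (hZ : Z ω = 0) :
    obsD2 Z D1 D2 ω = potD2 D1 D2 false ω := by
  simp [obsD2, obsD1, potD2, hZ]

lemma mem_compliers_potD2_iff {ω : α} (hD1 : ∀ z, D1 z ω = 0 ∨ D1 z ω = 1)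
    (hmono : D1 false ω ≤ D1 true ω) :
    ω ∈ compliers (potD2 D1 D2) ↔ ω ∈ CCev D1 D2 ∪ NCev D1 D2 ∪ ACev D1 D2 := by
  rcases hD1 true with h1 | h1 <;> rcases hD1 false with h0 | h0
  case inl.inr => norm_num [h1, h0] at hmono
  all_goals simp [compliers, potD2, CCev, NCev, ACev, h1, h0]

lemma disjoint_CCev_NCev : Disjoint (CCev D1 D2) (NCev D1 D2) := by
  refine Set.disjoint_left.2 fun ω hC hN => ?_
  linarith [hC.1, hN.1, hN.2.1]

lemma disjoint_CCev_union_NCev_ACev : Disjoint (CCev D1 D2 ∪ NCev D1 D2) (ACev D1 D2) := by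
  refine Set.disjoint_left.2 fun ω hCN hA => ?_
  rcases hCN with hC | hN
  · linarith [hC.1, hA.1, hA.2.1]
  · linarith [hN.1, hA.1]

variable [MeasurableSpace α] {μ : Measure α}

lemma measurable_potD2 (hD1 : ∀ z, Measurable (D1 z)) (hD2 : ∀ z d, Measurable (D2 z d))
    (z : Bool) : Measurable (potD2 D1 D2 z) := by
  unfold potD2
  fun_prop

lemma indepFun_potD2 {β γ : Type*} [MeasurableSpace β] [MeasurableSpace γ] {Y : α → β} {Z : α → γ}
    (h : IndepFun (fun ω => ((fun z => D1 z ω), (fun z d => D2 z d ω), Y ω)) Z μ) (z : Bool) :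
    IndepFun (potD2 D1 D2 z) Z μ :=
  h.comp (φ := fun p : (Bool → ℝ) × (Bool → Bool → ℝ) × β =>
    p.2.1 z true * p.1 z + p.2.1 z false * (1 - p.1 z)) (by fun_prop) measurable_id

lemma measurableSet_NCev (hD1 : ∀ z, Measurable (D1 z)) (hD2 : ∀ z d, Measurable (D2 z d)) :
    MeasurableSet (NCev D1 D2) := by
  unfold NCev
  measurability

lemma measurableSet_ACev (hD1 : ∀ z, Measurable (D1 z)) (hD2 : ∀ z d, Measurable (D2 z d)) :
    MeasurableSet (ACev D1 D2) := by
  unfold ACev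
  measurability

lemma measureReal_compliers_potD2 [IsFiniteMeasure μ] (hD1 : ∀ z, Measurable (D1 z))
    (hD2 : ∀ z d, Measurable (D2 z d)) (hD101 : ∀ z ω, D1 z ω = 0 ∨ D1 z ω = 1)
    (hmono : ∀ᵐ ω ∂μ, D1 false ω ≤ D1 true ω) :
    μ.real (compliers (potD2 D1 D2)) =
      μ.real (CCev D1 D2) + μ.real (NCev D1 D2) + μ.real (ACev D1 D2) := by
  have compliers_ae_eq :
      compliers (potD2 D1 D2) =ᵐ[μ] (CCev D1 D2 ∪ NCev D1 D2 ∪ ACev D1 D2 : Set α) := by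
    filter_upwards [hmono] with ω hω
    exact propext (mem_compliers_potD2_iff (fun z => hD101 z ω) hω)
  rw [measureReal_congr compliers_ae_eq,
    measureReal_union disjoint_CCev_union_NCev_ACev (measurableSet_ACev hD1 hD2),
    measureReal_union disjoint_CCev_NCev (measurableSet_NCev hD1 hD2)]

end SecondTreatment

theorem stmt_1_general {μ : Measure Ω} [IsFiniteMeasure μ] {Z : Ω → ℝ} {D1 : Bool → Ω → ℝ}
    {D2 : Bool → Bool → Ω → ℝ} (hZ : Measurable Z) (hD1 : ∀ z, Measurable (D1 z))
    (hD2 : ∀ z d, Measurable (D2 z d)) (hZ1 : μ (Z ⁻¹' {1}) ≠ 0) (hZ0 : μ (Z ⁻¹' {0}) ≠ 0)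
    (hD101 : ∀ z ω, D1 z ω = 0 ∨ D1 z ω = 1) (hD201 : ∀ z d ω, D2 z d ω = 0 ∨ D2 z d ω = 1)
    (hindep : ∀ z, IndepFun (potD2 D1 D2 z) Z μ)
    (hmono1 : ∀ᵐ ω ∂μ, D1 false ω ≤ D1 true ω)
    (hmono2 : ∀ᵐ ω ∂μ, potD2 D1 D2 false ω ≤ potD2 D1 D2 true ω) :
    dE μ Z (obsD2 Z D1 D2) =
      μ.real (CCev D1 D2) + μ.real (NCev D1 D2) + μ.real (ACev D1 D2) := by
  have hP : ∀ z, Measurable (potD2 D1 D2 z) := measurable_potD2 hD1 hD2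
  have hP01 (z : Bool) (ω : Ω) : potD2 D1 D2 z ω = 0 ∨ potD2 D1 D2 z ω = 1 :=
    potD2_eq_zero_or_one (hD101 z ω) fun d => hD201 z d ω
  calc dE μ Z (obsD2 Z D1 D2)
      = ∫ ω, potD2 D1 D2 true ω ∂μ - ∫ ω, potD2 D1 D2 false ω ∂μ :=
        dE_eq_integral_sub_integral hZ hP hindep hZ1 hZ0
          (fun _ => obsD2_eq_potD2_true) (fun _ => obsD2_eq_potD2_false)
    _ = μ.real (compliers (potD2 D1 D2)) :=
        integral_sub_integral_eq_measureReal_compliers hP hP01 hmono2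
    _ = μ.real (CCev D1 D2) + μ.real (NCev D1 D2) + μ.real (ACev D1 D2) :=
        measureReal_compliers_potD2 hD1 hD2 hD101 hmono1

theorem stmt_1
    (μ : Measure Ω) [IsProbabilityMeasure μ]
    (Z : Ω → ℝ) (D1 : Bool → Ω → ℝ) (D2 : Bool → Bool → Ω → ℝ)
    (Yp : Bool → Bool → Bool → Ω → ℝ)
    (hZmeas : Measurable Z)
    (hD1meas : ∀ b, Measurable (D1 b))
    (hD2meas : ∀ b b', Measurable (D2 b b'))
    (hYmeas : ∀ z d1 d2, Measurable (Yp z d1 d2))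
    (hYint : ∀ z d1 d2, Integrable (Yp z d1 d2) μ)
    (hZ01 : ∀ ω, Z ω = 0 ∨ Z ω = 1)
    (hZpos : 0 < μ (Z ⁻¹' {1})) (hZlt : μ (Z ⁻¹' {1}) < 1)
    (hD101 : ∀ b ω, D1 b ω = 0 ∨ D1 b ω = 1)
    (hD201 : ∀ b b' ω, D2 b b' ω = 0 ∨ D2 b b' ω = 1)
    (hindep : IndepFun
      (fun ω => ((fun b => D1 b ω), (fun b b' => D2 b b' ω), (fun z d1 d2 => Yp z d1 d2 ω))) Z μ)
    (hrel1 : 0 < dE μ Z (obsD1 Z D1))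
    (hrel2 : 0 < dE μ Z (obsD2 Z D1 D2))
    (hrelAnd : 0 < dE μ Z (obsDand Z D1 D2))
    (hrelOr : 0 < dE μ Z (obsDor Z D1 D2))
    (hmono1 : ∀ᵐ ω ∂μ, D1 false ω ≤ D1 true ω)
    (hmono2 : ∀ᵐ ω ∂μ,
      D2 false true ω * D1 false ω + D2 false false ω * (1 - D1 false ω) ≤
        D2 true true ω * D1 true ω + D2 true false ω * (1 - D1 true ω))
    (hexcl : ∀ d1 d2, ∀ᵐ ω ∂μ, Yp true d1 d2 ω = Yp false d1 d2 ω) :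
    dE μ Z (obsD2 Z D1 D2) =
      (μ (CCev D1 D2)).toReal + (μ (NCev D1 D2)).toReal + (μ (ACev D1 D2)).toReal := by
  have hZ_univ : Z ⁻¹' {1} ∪ Z ⁻¹' {0} = Set.univ := Set.eq_univ_of_forall fun ω => (hZ01 ω).symm
  exact stmt_1_general hZmeas hD1meas hD2meas hZpos.ne'
    (measure_ne_zero_of_union_eq_univ hZ_univ hZlt) hD101 hD201 (indepFun_potD2 hindep)
    hmono1 hmono2
end
end

section
/- Under Independence, Relevance, Monotonicity, and the Double exclusion restriction, the first stage for D∧ satisfies ΔE[D∧|Z] = μ({C1,C2}) + μ({C1,A2}). (Lemma 2.3) -/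
open MeasureTheory ProbabilityTheory

noncomputable section

variable {Ω : Type*} [MeasurableSpace Ω]

/-!
Independence turns both conditional means of `D∧` into means of the potential treatments
`D1(z)·D2(z,1)`. Double exclusion makes the second factor the same for both `z`, so their difference
is `(D1(1) − D1(0))·D2(1)`, which by monotonicity is the indicator of the first-part compliers with
`D2(1) = 1`; splitting by the value of `D2(0)` gives `{C1,C2}` and `{C1,A2}`.
-/

/-- The potential summary treatment `D∧(z) = D1(z)·D2(z,D1(z))`. For `{0,1}`-valued `D1(z)` the
product vanishes unless `D1(z) = 1`, so it is encoded as `D1(z)·D2(z,1)`. -/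
def potDand (D1 : Bool → Ω → ℝ) (D2 : Bool → Bool → Ω → ℝ) (z : Bool) (ω : Ω) : ℝ :=
  D1 z ω * D2 z true ω

section Conditioning

variable {β : Type*} [MeasurableSpace β] {μ : Measure Ω} [IsFiniteMeasure μ]

theorem identDistrib_cond_of_indepFun {γ : Type*} [MeasurableSpace γ] {Z : Ω → β} {A : Ω → γ}
    {t : Set β} (hZ : Measurable Z) (hA : AEMeasurable A μ) (hindep : IndepFun A Z μ)
    (ht : MeasurableSet t) (hne : μ (Z ⁻¹' t) ≠ 0) :
    IdentDistrib A A μ[|Z ⁻¹' t] μ where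
  aemeasurable_fst := hA.mono_ac cond_absolutelyContinuous
  aemeasurable_snd := hA
  map_eq := by
    ext s hs
    calc
      (μ[|Z ⁻¹' t]).map A s = (μ (Z ⁻¹' t))⁻¹ * μ (Z ⁻¹' t ∩ A ⁻¹' s) := by
        rw [Measure.map_apply_of_aemeasurable (hA.mono_ac cond_absolutelyContinuous) hs,
          cond_apply (hZ ht)]
      _ = (μ (Z ⁻¹' t))⁻¹ * (μ (Z ⁻¹' t) * μ (A ⁻¹' s)) := by
        rw [hindep.symm.measure_inter_preimage_eq_mul t s ht hs]
      _ = μ.map A s := by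
        rw [ENNReal.inv_mul_cancel_left' (absurd · hne) (absurd · (measure_ne_top _ _)),
          Measure.map_apply_of_aemeasurable hA hs]

theorem integral_cond_eq_integral_of_indepFun {E : Type*} [NormedAddCommGroup E]
    [NormedSpace ℝ E] [MeasurableSpace E] [BorelSpace E] {Z : Ω → β} {A A' : Ω → E} {t : Set β}
    (hZ : Measurable Z) (hA' : AEMeasurable A' μ) (hindep : IndepFun A' Z μ)
    (ht : MeasurableSet t) (hne : μ (Z ⁻¹' t) ≠ 0) (heq : ∀ ω, Z ω ∈ t → A ω = A' ω) :
    ∫ ω, A ω ∂μ[|Z ⁻¹' t] = ∫ ω, A' ω ∂μ :=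
  calc
    ∫ ω, A ω ∂μ[|Z ⁻¹' t] = ∫ ω, A' ω ∂μ[|Z ⁻¹' t] :=
      integral_congr_ae ((ae_cond_mem (hZ ht)).mono heq)
    _ = ∫ ω, A' ω ∂μ := (identDistrib_cond_of_indepFun hZ hA' hindep ht hne).integral_eq

end Conditioning

section Pointwise

omit [MeasurableSpace Ω]

variable {Z : Ω → ℝ} {D1 : Bool → Ω → ℝ} {D2 : Bool → Bool → Ω → ℝ} {ω : Ω}

theorem obsDand_of_eq_one (hZ : Z ω = 1) (hD1 : D1 true ω = 0 ∨ D1 true ω = 1) :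
    obsDand Z D1 D2 ω = potDand D1 D2 true ω := by
  rcases hD1 with h | h <;> simp [obsDand, obsD2, obsD1, potDand, hZ, h]

theorem obsDand_of_eq_zero (hZ : Z ω = 0) (hD1 : D1 false ω = 0 ∨ D1 false ω = 1) :
    obsDand Z D1 D2 ω = potDand D1 D2 false ω := by
  rcases hD1 with h | h <;> simp [obsDand, obsD2, obsD1, potDand, hZ, h]

theorem disjoint_CCev_CAev : Disjoint (CCev D1 D2) (CAev D1 D2) :=
  Set.disjoint_left.2 fun _ hCC hCA => by linarith [hCC.2, hCA.2.1, hCA.2.2]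

theorem mem_CCev_union_CAev_iff (hD2 : ∀ z d, D2 z d ω = 0 ∨ D2 z d ω = 1) :
    ω ∈ CCev D1 D2 ∪ CAev D1 D2 ↔ D1 true ω - D1 false ω = 1 ∧ D2 true true ω = 1 := by
  rcases hD2 true true with h | h <;> rcases hD2 false false with h' | h' <;>
    norm_num [CCev, CAev, h, h']

theorem potDand_sub_potDand_eq_indicator (hD1 : ∀ z, D1 z ω = 0 ∨ D1 z ω = 1)
    (hD2 : ∀ z d, D2 z d ω = 0 ∨ D2 z d ω = 1) (hmono : D1 false ω ≤ D1 true ω)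
    (hexcl : D2 true true ω = D2 false true ω) :
    potDand D1 D2 true ω - potDand D1 D2 false ω =
      (CCev D1 D2 ∪ CAev D1 D2).indicator 1 ω := by
  have hfactor : potDand D1 D2 true ω - potDand D1 D2 false ω =
      (D1 true ω - D1 false ω) * D2 true true ω := by
    rw [potDand, potDand, ← hexcl, sub_mul]
  have hcomplier : D1 true ω - D1 false ω = 0 ∨ D1 true ω - D1 false ω = 1 := by
    grind
  rcases hcomplier with h | h <;> rcases hD2 true true with h' | h' <;>
    simp [hfactor, Set.indicator, mem_CCev_union_CAev_iff hD2, h, h']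

end Pointwise

section FirstStage

variable {μ : Measure Ω} {D1 : Bool → Ω → ℝ} {D2 : Bool → Bool → Ω → ℝ}

theorem measurable_potDand (hD1 : ∀ z, Measurable (D1 z)) (hD2 : ∀ z d, Measurable (D2 z d))
    (z : Bool) : Measurable (potDand D1 D2 z) :=
  (hD1 z).mul (hD2 z true)

theorem measurableSet_CCev (hD1 : ∀ z, Measurable (D1 z)) (hD2 : ∀ z d, Measurable (D2 z d)) :
    MeasurableSet (CCev D1 D2) :=
  (((hD1 true).sub (hD1 false)) (measurableSet_singleton 1)).inter
    (((hD2 true true).sub (hD2 false false)) (measurableSet_singleton 1))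

theorem measurableSet_CAev (hD1 : ∀ z, Measurable (D1 z)) (hD2 : ∀ z d, Measurable (D2 z d)) :
    MeasurableSet (CAev D1 D2) :=
  (((hD1 true).sub (hD1 false)) (measurableSet_singleton 1)).inter
    ((hD2 true true (measurableSet_singleton 1)).inter
      (hD2 false false (measurableSet_singleton 1)))

theorem indepFun_potDand {β γ : Type*} [MeasurableSpace β] [MeasurableSpace γ] {Z : Ω → β}
    {Y : Ω → γ}
    (hindep : IndepFun (fun ω => ((fun z => D1 z ω), (fun z d => D2 z d ω), Y ω)) Z μ)
    (z : Bool) : IndepFun (potDand D1 D2 z) Z μ :=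
  have hmeas : Measurable fun p : (Bool → ℝ) × (Bool → Bool → ℝ) × γ => p.1 z * p.2.1 z true := by
    fun_prop
  hindep.comp hmeas measurable_id

theorem integrable_potDand [IsFiniteMeasure μ] (hD1meas : ∀ z, Measurable (D1 z))
    (hD2meas : ∀ z d, Measurable (D2 z d)) (hD1 : ∀ z ω, D1 z ω = 0 ∨ D1 z ω = 1)
    (hD2 : ∀ z d ω, D2 z d ω = 0 ∨ D2 z d ω = 1) (z : Bool) :
    Integrable (potDand D1 D2 z) μ := by
  refine .of_bound (measurable_potDand hD1meas hD2meas z).aestronglyMeasurable 1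
    (ae_of_all _ fun ω => ?_)
  rcases hD1 z ω with h | h <;> rcases hD2 z true ω with h' | h' <;> simp [potDand, h, h']

theorem dE_obsDand_eq_integral_sub_integral [IsFiniteMeasure μ] {Z : Ω → ℝ} (hZ : Measurable Z)
    (hZ0 : μ (Z ⁻¹' {0}) ≠ 0) (hZ1 : μ (Z ⁻¹' {1}) ≠ 0)
    (hmeas : ∀ z, AEMeasurable (potDand D1 D2 z) μ) (hindep : ∀ z, IndepFun (potDand D1 D2 z) Z μ)
    (hD1 : ∀ z ω, D1 z ω = 0 ∨ D1 z ω = 1) :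
    dE μ Z (obsDand Z D1 D2) = ∫ ω, potDand D1 D2 true ω ∂μ - ∫ ω, potDand D1 D2 false ω ∂μ := by
  rw [dE,
    integral_cond_eq_integral_of_indepFun hZ (hmeas true) (hindep true)
      (measurableSet_singleton 1) hZ1 fun ω hω => obsDand_of_eq_one hω (hD1 true ω),
    integral_cond_eq_integral_of_indepFun hZ (hmeas false) (hindep false)
      (measurableSet_singleton 0) hZ0 fun ω hω => obsDand_of_eq_zero hω (hD1 false ω)]

theorem integral_potDand_sub_integral_potDand [IsFiniteMeasure μ]
    (hD1meas : ∀ z, Measurable (D1 z)) (hD2meas : ∀ z d, Measurable (D2 z d))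
    (hD1 : ∀ z ω, D1 z ω = 0 ∨ D1 z ω = 1) (hD2 : ∀ z d ω, D2 z d ω = 0 ∨ D2 z d ω = 1)
    (hmono : ∀ᵐ ω ∂μ, D1 false ω ≤ D1 true ω)
    (hexcl : ∀ᵐ ω ∂μ, D2 true true ω = D2 false true ω) :
    ∫ ω, potDand D1 D2 true ω ∂μ - ∫ ω, potDand D1 D2 false ω ∂μ =
      μ.real (CCev D1 D2) + μ.real (CAev D1 D2) := by
  have hint := integrable_potDand (μ := μ) hD1meas hD2meas hD1 hD2
  have hCC := measurableSet_CCev hD1meas hD2meas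
  have hCA := measurableSet_CAev hD1meas hD2meas
  calc
    ∫ ω, potDand D1 D2 true ω ∂μ - ∫ ω, potDand D1 D2 false ω ∂μ
      = ∫ ω, potDand D1 D2 true ω - potDand D1 D2 false ω ∂μ :=
        (integral_sub (hint true) (hint false)).symm
    _ = ∫ ω, (CCev D1 D2 ∪ CAev D1 D2).indicator 1 ω ∂μ := by
        refine integral_congr_ae ?_
        filter_upwards [hmono, hexcl] with ω hmonoω hexclω
        exact potDand_sub_potDand_eq_indicator (hD1 · ω) (hD2 · · ω) hmonoω hexclω
    _ = μ.real (CCev D1 D2 ∪ CAev D1 D2) := integral_indicator_one (hCC.union hCA)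
    _ = μ.real (CCev D1 D2) + μ.real (CAev D1 D2) := measureReal_union disjoint_CCev_CAev hCA

end FirstStage

theorem measure_preimage_zero_ne_zero {μ : Measure Ω} [IsProbabilityMeasure μ] {Z : Ω → ℝ}
    (hZ : Measurable Z) (hZ01 : ∀ ω, Z ω = 0 ∨ Z ω = 1) (hlt : μ (Z ⁻¹' {1}) < 1) :
    μ (Z ⁻¹' {0}) ≠ 0 := by
  have hcompl : Z ⁻¹' {0} = (Z ⁻¹' {1})ᶜ := by
    ext ω
    rcases hZ01 ω with h | h <;> simp [h]
  rw [hcompl, Ne, prob_compl_eq_zero_iff (hZ (measurableSet_singleton 1))]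
  exact hlt.ne

theorem stmt_8_general
    (μ : Measure Ω) [IsFiniteMeasure μ]
    (Z : Ω → ℝ) (D1 : Bool → Ω → ℝ) (D2 : Bool → Bool → Ω → ℝ)
    (hZmeas : Measurable Z)
    (hD1meas : ∀ z, Measurable (D1 z))
    (hD2meas : ∀ z d, Measurable (D2 z d))
    (hZ0 : μ (Z ⁻¹' {0}) ≠ 0) (hZ1 : μ (Z ⁻¹' {1}) ≠ 0)
    (hD101 : ∀ z ω, D1 z ω = 0 ∨ D1 z ω = 1)
    (hD201 : ∀ z d ω, D2 z d ω = 0 ∨ D2 z d ω = 1)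
    (hindep : ∀ z, IndepFun (potDand D1 D2 z) Z μ)
    (hmono : ∀ᵐ ω ∂μ, D1 false ω ≤ D1 true ω)
    (hexcl : ∀ᵐ ω ∂μ, D2 true true ω = D2 false true ω) :
    dE μ Z (obsDand Z D1 D2) = (μ (CCev D1 D2)).toReal + (μ (CAev D1 D2)).toReal :=
  have hmeas z : AEMeasurable (potDand D1 D2 z) μ :=
    (measurable_potDand hD1meas hD2meas z).aemeasurable
  (dE_obsDand_eq_integral_sub_integral hZmeas hZ0 hZ1 hmeas hindep hD101).trans
    (integral_potDand_sub_integral_potDand hD1meas hD2meas hD101 hD201 hmono hexcl)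

theorem stmt_8
    (μ : Measure Ω) [IsProbabilityMeasure μ]
    (Z : Ω → ℝ) (D1 : Bool → Ω → ℝ) (D2 : Bool → Bool → Ω → ℝ)
    (Yp : Bool → Bool → Bool → Ω → ℝ)
    (hZmeas : Measurable Z)
    (hD1meas : ∀ b, Measurable (D1 b))
    (hD2meas : ∀ b b', Measurable (D2 b b'))
    (hYmeas : ∀ z d1 d2, Measurable (Yp z d1 d2))
    (hYint : ∀ z d1 d2, Integrable (Yp z d1 d2) μ)
    (hZ01 : ∀ ω, Z ω = 0 ∨ Z ω = 1)
    (hZpos : 0 < μ (Z ⁻¹' {1})) (hZlt : μ (Z ⁻¹' {1}) < 1)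
    (hD101 : ∀ b ω, D1 b ω = 0 ∨ D1 b ω = 1)
    (hD201 : ∀ b b' ω, D2 b b' ω = 0 ∨ D2 b b' ω = 1)
    (hindep : IndepFun
      (fun ω => ((fun b => D1 b ω), (fun b b' => D2 b b' ω), (fun z d1 d2 => Yp z d1 d2 ω))) Z μ)
    (hrel1 : 0 < dE μ Z (obsD1 Z D1))
    (hrel2 : 0 < dE μ Z (obsD2 Z D1 D2))
    (hrelAnd : 0 < dE μ Z (obsDand Z D1 D2))
    (hrelOr : 0 < dE μ Z (obsDor Z D1 D2))
    (hmono1 : ∀ᵐ ω ∂μ, D1 false ω ≤ D1 true ω)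
    (hmono2 : ∀ᵐ ω ∂μ,
      D2 false true ω * D1 false ω + D2 false false ω * (1 - D1 false ω) ≤
        D2 true true ω * D1 true ω + D2 true false ω * (1 - D1 true ω))
    (hexcl : ∀ d1 d2, ∀ᵐ ω ∂μ, Yp true d1 d2 ω = Yp false d1 d2 ω)
    (hdexcl : ∀ d1, ∀ᵐ ω ∂μ, D2 true d1 ω = D2 false d1 ω) :
    dE μ Z (obsDand Z D1 D2) = (μ (CCev D1 D2)).toReal + (μ (CAev D1 D2)).toReal :=
  stmt_8_general μ Z D1 D2 hZmeas hD1meas hD2meas (measure_preimage_zero_ne_zero hZmeas hZ01 hZlt)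
    hZpos.ne' hD101 hD201 (indepFun_potDand hindep) hmono1 (hdexcl true)
end
end
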